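/- Rad is an A-invariant subspace of V, the quotient V' = V/Rad has ℂ-dimension 2N + 4|k|, and V' is a simple A-module: the only subspaces of V' invariant under the operators induced by T, π and multiplication by X are {0} and V'. -/

import Mathlib

noncomputable section

/-- `V = ℂ[X, X⁻¹]`, the space of complex Laurent polynomials. -/
abbrev V : Type := LaurentPolynomial ℂ

/-- The monomial `X ^ m`. -/
def Xm (m : ℤ) : V := LaurentPolynomial.T m

/-- The radical of the duality pairing. -/
def Rad (pair : V →ₗ[ℂ] V →ₗ[ℂ] ℂ) : Submodule ℂ V := LinearMap.ker pair

/- Write `q`, `t` for `q½`, `t½` and `H` for the operator `T` of the paper. The duality pairing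
satisfies `{H f, g} = {f, H g}` and `{π f, g} = {f, X H g}`, so its radical is an invariant
subspace, and it is the largest one all of whose elements vanish at `t⁻¹`.

An invariant subspace `M` is an ideal, hence governed by its common zeros. The operator `π` moves
them by `x ↦ q x⁻¹`. The operator `H` moves them by `x ↦ x⁻¹`, except when `(t x) ^ 2 = 1`, and it
forces a common zero with `x ^ 2 = 1` to be double. Double zeros are moved in the same way, and a
double zero passes to a zero at `x⁻¹` even when `(t x) ^ 2 = 1`. Therefore one common zero among the
powers of `q` forces all of them, doubly at `q ^ j` for `j` in `(a + k, a - k]` with `N ∣ a`. These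
`2 * N + 4 * |k|` conditions define an invariant subspace, which is thus the radical. An invariant
subspace containing it contains `(X ^ (2 * N) - 1) ^ 2`, so if it is proper it has a common zero
among the powers of `q`, and then it equals the radical. -/

section

open LaurentPolynomial

theorem eq_bot_or_eq_top_of_comap_mkQ {R E : Type*} [Ring R] [AddCommGroup E] [Module R E]
    {p : Submodule R E} {W : Submodule R (E ⧸ p)}
    (h : W.comap p.mkQ = p ∨ W.comap p.mkQ = ⊤) : W = ⊥ ∨ W = ⊤ := by
  have hinj := Submodule.comap_injective_of_surjective p.mkQ_surjective
  exact h.imp (fun h => hinj (by rw [h, Submodule.comap_bot, p.ker_mkQ]))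
    fun h => hinj (by rw [h, Submodule.comap_top])

section Laurent

variable {R : Type*} [CommRing R]

theorem laurent_linearMap_ext {M : Type*} [AddCommMonoid M] [Module R M]
    {φ ψ : R[T;T⁻¹] →ₗ[R] M} (h : ∀ n : ℤ, φ (T n) = ψ (T n)) : φ = ψ :=
  (AddMonoidAlgebra.basis ℤ R).ext fun n => by
    rw [AddMonoidAlgebra.basis_apply]
    exact h n

theorem T_one_mul_T_neg_one : (T 1 * T (-1) : R[T;T⁻¹]) = 1 := by
  rw [← T_add, add_neg_cancel, T_zero]

theorem T_neg_one_mul_T_one : (T (-1) * T 1 : R[T;T⁻¹]) = 1 := by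
  rw [← T_add, neg_add_cancel, T_zero]

@[elab_as_elim]
theorem laurent_induction {p : R[T;T⁻¹] → Prop} (f : R[T;T⁻¹]) (one : p 1)
    (add : ∀ f g, p f → p g → p (f + g)) (smul : ∀ (a : R) f, p f → p (a • f))
    (T_one_mul : ∀ f, p f → p (T 1 * f)) (T_neg_one_mul : ∀ f, p f → p (T (-1) * f)) : p f := by
  have monomial : ∀ n : ℤ, p (T n) := fun n => by
    induction n using Int.induction_on with
    | zero => exact one
    | succ n ih => rw [add_comm, T_add]; exact T_one_mul _ ih
    | pred n ih => rw [sub_eq_neg_add, T_add]; exact T_neg_one_mul _ ih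
  induction f using LaurentPolynomial.induction_on' with
  | add f g hf hg => exact add f g hf hg
  | C_mul_T n a => rw [← smul_eq_C_mul]; exact smul a _ (monomial n)

theorem laurent_algHom_ext {A : Type*} [CommRing A] [Algebra R A] {φ ψ : R[T;T⁻¹] →ₐ[R] A}
    (h : φ (T 1) = ψ (T 1)) : φ = ψ := by
  have hinv : φ (T (-1)) = ψ (T (-1)) := by
    refine left_inv_eq_right_inv (a := φ (T 1)) ?_ ?_
    · rw [← map_mul, T_neg_one_mul_T_one, map_one]
    · rw [h, ← map_mul, T_one_mul_T_neg_one, map_one]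
  refine AlgHom.ext fun f => ?_
  induction f using laurent_induction with
  | one => simp only [map_one]
  | add f g hf hg => rw [map_add, map_add, hf, hg]
  | smul a f hf => rw [map_smul, map_smul, hf]
  | T_one_mul f hf => rw [map_mul, map_mul, h, hf]
  | T_neg_one_mul f hf => rw [map_mul, map_mul, hinv, hf]

/-- Evaluation of Laurent polynomials at a unit `x`, as an algebra homomorphism. -/
def laurentEval (x : Rˣ) : R[T;T⁻¹] →ₐ[R] R :=
  { eval₂ (RingHom.id R) x with commutes' := fun r => eval₂_C (RingHom.id R) x r }

@[simp]
theorem laurentEval_T (x : Rˣ) (n : ℤ) : laurentEval x (T n) = ((x ^ n : Rˣ) : R) :=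
  eval₂_T _ x n

theorem laurentEval_toLaurent (x : Rˣ) (p : Polynomial R) :
    laurentEval x (Polynomial.toLaurent p) = p.eval (x : R) :=
  eval₂_toLaurent _ x p

theorem laurentEval_invert (x : Rˣ) (f : R[T;T⁻¹]) :
    laurentEval x (invert f) = laurentEval x⁻¹ f :=
  DFunLike.congr_fun (laurent_algHom_ext (φ := (laurentEval x).comp invert.toAlgHom)
    (ψ := laurentEval x⁻¹) (by simp)) f

/-- The Euler operator `T ^ n ↦ n T ^ n`, i.e. `T · d/dT`, as a linear map. -/
def eulerMap : R[T;T⁻¹] →ₗ[R] R[T;T⁻¹] :=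
  (AddMonoidAlgebra.basis ℤ R).constr R fun n => (n : R) • (T n : R[T;T⁻¹])

theorem eulerMap_T (n : ℤ) : eulerMap (T n : R[T;T⁻¹]) = (n : R) • T n := by
  refine Eq.trans ?_ (Module.Basis.constr_basis (AddMonoidAlgebra.basis ℤ R) R
    (fun n => (n : R) • (T n : R[T;T⁻¹])) n)
  rw [AddMonoidAlgebra.basis_apply]
  rfl

/-- The Euler operator `T · d/dT` as a derivation. Being invariant under rescaling `T`, it is the
convenient derivative on the punctured line. -/
def eulerDerivation : Derivation R R[T;T⁻¹] R[T;T⁻¹] :=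
  .mk' eulerMap fun f g => by
    induction f using LaurentPolynomial.induction_on' with
    | add f f' hf hf' => simp only [add_mul, map_add, hf, hf', smul_add, add_smul]; abel
    | C_mul_T m a =>
      induction g using LaurentPolynomial.induction_on' with
      | add g g' hg hg' => simp only [mul_add, map_add, hg, hg', smul_add, add_smul]; abel
      | C_mul_T n b =>
        simp only [← smul_eq_C_mul, smul_mul_smul_comm, ← T_add, map_smul, eulerMap_T, smul_eq_mul]
        simp only [mul_smul_comm, ← T_add, add_comm n m, smul_smul, ← add_smul]
        push_cast
        ring_nf

@[simp]
theorem eulerDerivation_T (n : ℤ) : eulerDerivation (T n : R[T;T⁻¹]) = (n : R) • T n :=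
  eulerMap_T n

theorem eulerDerivation_invert (f : R[T;T⁻¹]) :
    eulerDerivation (invert f) = -invert (eulerDerivation f) :=
  DFunLike.congr_fun (laurent_linearMap_ext
    (φ := eulerDerivation.toLinearMap ∘ₗ invert.toLinearMap)
    (ψ := -(invert.toLinearMap ∘ₗ eulerDerivation.toLinearMap)) fun n => by simp) f

theorem eulerDerivation_toLaurent (p : Polynomial R) :
    eulerDerivation (Polynomial.toLaurent p)
      = Polynomial.toLaurent (Polynomial.X * Polynomial.derivative p) := by
  induction p using Polynomial.induction_on' with
  | add p q hp hq => simp only [map_add, mul_add, hp, hq]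
  | monomial n a =>
    rw [← Polynomial.C_mul_X_pow_eq_monomial, Polynomial.toLaurent_C_mul_X_pow, ← smul_eq_C_mul,
      Derivation.map_smul, eulerDerivation_T]
    rcases n with _ | n
    · simp
    · rw [Polynomial.derivative_C_mul_X_pow, Nat.add_sub_cancel, mul_left_comm, ← pow_succ',
        Polynomial.toLaurent_C_mul_X_pow, ← smul_eq_C_mul, smul_smul]
      push_cast
      rfl

end Laurent

section Vanishing

variable {K : Type*} [Field K]

/-- The points of the punctured line at which every element of `M` vanishes. -/
def commonZeros (M : Submodule K K[T;T⁻¹]) : Set Kˣ :=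
  {x | ∀ f ∈ M, laurentEval x f = 0}

/-- The points of the punctured line at which the derivative of every element of `M` vanishes. -/
def commonCriticalPoints (M : Submodule K K[T;T⁻¹]) : Set Kˣ :=
  {x | ∀ f ∈ M, laurentEval x (eulerDerivation f) = 0}

/-- The Laurent polynomials that vanish on `s` and whose derivative vanishes on `e`. -/
def vanishingSubmodule (s e : Set Kˣ) : Submodule K K[T;T⁻¹] where
  carrier := {f | (∀ x ∈ s, laurentEval x f = 0) ∧ ∀ x ∈ e, laurentEval x (eulerDerivation f) = 0}
  add_mem' := by
    rintro f g ⟨hf, hf'⟩ ⟨hg, hg'⟩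
    exact ⟨fun x hx => by rw [map_add, hf x hx, hg x hx, add_zero],
      fun x hx => by rw [map_add, map_add, hf' x hx, hg' x hx, add_zero]⟩
  zero_mem' := ⟨fun _ _ => map_zero _, fun _ _ => by rw [map_zero, map_zero]⟩
  smul_mem' := by
    rintro a f ⟨hf, hf'⟩
    exact ⟨fun x hx => by rw [map_smul, hf x hx, smul_zero],
      fun x hx => by rw [Derivation.map_smul, map_smul, hf' x hx, smul_zero]⟩

theorem mem_vanishingSubmodule {s e : Set Kˣ} {f : K[T;T⁻¹]} :
    f ∈ vanishingSubmodule s e ↔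
      (∀ x ∈ s, laurentEval x f = 0) ∧ ∀ x ∈ e, laurentEval x (eulerDerivation f) = 0 :=
  Iff.rfl

theorem le_vanishingSubmodule {M : Submodule K K[T;T⁻¹]} {s e : Set Kˣ}
    (hs : s ⊆ commonZeros M) (he : e ⊆ commonCriticalPoints M) : M ≤ vanishingSubmodule s e :=
  fun f hf => ⟨fun _ hx => hs hx f hf, fun _ hx => he hx f hf⟩

theorem sq_mem_vanishingSubmodule {s e : Set Kˣ} (hes : e ⊆ s) {f : K[T;T⁻¹]}
    (hf : ∀ x ∈ s, laurentEval x f = 0) : f ^ 2 ∈ vanishingSubmodule s e := by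
  refine ⟨fun x hx => by rw [map_pow, hf x hx, zero_pow two_ne_zero], fun x hx => ?_⟩
  simp only [Derivation.leibniz_pow, map_nsmul, smul_eq_mul, map_mul, map_pow, hf x (hes hx)]
  simp

/-- The values on `s` and the derivatives on `e` of a Laurent polynomial. -/
def jetMap (s e : Set Kˣ) : K[T;T⁻¹] →ₗ[K] (s → K) × (e → K) :=
  (LinearMap.pi fun x => (laurentEval x.1).toLinearMap).prod
    (LinearMap.pi fun x => (laurentEval x.1).toLinearMap ∘ₗ eulerDerivation.toLinearMap)

theorem ker_jetMap (s e : Set Kˣ) : LinearMap.ker (jetMap s e) = vanishingSubmodule s e := by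
  ext f
  simp only [LinearMap.mem_ker, Prod.ext_iff, funext_iff, mem_vanishingSubmodule, Subtype.forall]
  rfl

theorem exists_laurentEval_eq (s : Finset Kˣ) (v : Kˣ → K) :
    ∃ f : K[T;T⁻¹], ∀ x ∈ s, laurentEval x f = v x := by
  classical
  refine ⟨Polynomial.toLaurent (Lagrange.interpolate s ((↑) : Kˣ → K) v), fun x hx => ?_⟩
  rw [laurentEval_toLaurent, Lagrange.eval_interpolate_at_node v Units.val_injective.injOn hx]

theorem exists_simple_zeros (s : Finset Kˣ) : ∃ w : K[T;T⁻¹], ∀ x ∈ s,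
    laurentEval x w = 0 ∧ laurentEval x (eulerDerivation w) ≠ 0 := by
  classical
  refine ⟨Polynomial.toLaurent (Lagrange.nodal s ((↑) : Kˣ → K)), fun x hx => ⟨?_, ?_⟩⟩
  · rw [laurentEval_toLaurent, Lagrange.eval_nodal_at_node hx]
  · rw [eulerDerivation_toLaurent, laurentEval_toLaurent, Polynomial.eval_mul, Polynomial.eval_X,
      Lagrange.eval_nodal_derivative_eval_node_eq hx]
    refine mul_ne_zero x.ne_zero (Lagrange.eval_nodal_not_at_node fun y hy => ?_)
    exact Units.val_injective.ne (Finset.ne_of_mem_erase hy).symm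

theorem jetMap_surjective {s e : Set Kˣ} (hs : s.Finite) (hes : e ⊆ s) :
    Function.Surjective (jetMap s e) := by
  classical
  rintro ⟨u, v⟩
  lift s to Finset Kˣ using hs
  obtain ⟨p, hp⟩ := exists_laurentEval_eq s fun x => if hx : x ∈ s then u ⟨x, hx⟩ else 0
  obtain ⟨w, hw⟩ := exists_simple_zeros s
  obtain ⟨r, hr⟩ := exists_laurentEval_eq s fun x => if hx : x ∈ e then
    (v ⟨x, hx⟩ - laurentEval x (eulerDerivation p)) / laurentEval x (eulerDerivation w) else 0
  refine ⟨p + w * r, Prod.ext (funext fun ⟨x, hx⟩ => ?_) (funext fun ⟨x, hx⟩ => ?_)⟩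
  · change laurentEval x (p + w * r) = u ⟨x, hx⟩
    have hx' : x ∈ s := hx
    rw [map_add, map_mul, (hw x hx').1, zero_mul, add_zero, hp x hx', dif_pos hx']
  · change laurentEval x (eulerDerivation (p + w * r)) = v ⟨x, hx⟩
    have hx' : x ∈ s := hes hx
    rw [map_add, Derivation.leibniz, smul_eq_mul, smul_eq_mul, map_add, map_add, map_mul, map_mul,
      (hw x hx').1, hr x hx', dif_pos hx, zero_mul, zero_add, div_mul_cancel₀ _ (hw x hx').2,
      add_sub_cancel]

theorem finrank_quotient_vanishingSubmodule {s e : Set Kˣ} (hs : s.Finite) (hes : e ⊆ s) :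
    Module.finrank K (K[T;T⁻¹] ⧸ vanishingSubmodule s e) = s.ncard + e.ncard := by
  have := hs.to_subtype
  have := (hs.subset hes).to_subtype
  have := Fintype.ofFinite s
  have := Fintype.ofFinite e
  rw [← ker_jetMap, ((jetMap s e).quotKerEquivOfSurjective (jetMap_surjective hs hes)).finrank_eq,
    Module.finrank_prod, Module.finrank_fintype_fun_eq_card, Module.finrank_fintype_fun_eq_card,
    ← Nat.card_eq_fintype_card, ← Nat.card_eq_fintype_card, Nat.card_coe_set_eq,
    Nat.card_coe_set_eq]

theorem exists_zpow_mem_commonZeros {A : Ideal K[T;T⁻¹]} (hA : A ≠ ⊤) {n : ℕ} (hn : 0 < n)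
    {ζ : Kˣ} (hζ : IsPrimitiveRoot ζ n) (hmem : (T n - 1) ^ 2 ∈ A) :
    ∃ j : ℤ, ζ ^ j ∈ commonZeros (A.restrictScalars K) := by
  obtain ⟨P, hP, hAP⟩ := A.exists_le_maximal hA
  let _ := Ideal.Quotient.field P
  have : NeZero n := ⟨hn.ne'⟩
  have hroot : (Ideal.Quotient.mk P (T 1)) ^ n = 1 := by
    have h := Ideal.Quotient.eq_zero_iff_mem.2 (hP.isPrime.mem_of_pow_mem _ (hAP hmem))
    rw [map_sub, map_one, sub_eq_zero] at h
    rw [← map_pow, T_pow, mul_one, h]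
  have hζP : IsPrimitiveRoot (algebraMap K (K[T;T⁻¹] ⧸ P) (ζ : K)) n :=
    (IsPrimitiveRoot.coe_units_iff.2 hζ).map_of_injective (algebraMap K (K[T;T⁻¹] ⧸ P)).injective
  obtain ⟨i, -, hi⟩ := hζP.eq_pow_of_pow_eq_one hroot
  have heval : Ideal.Quotient.mkₐ K P = (Algebra.ofId K _).comp (laurentEval (ζ ^ (i : ℤ))) := by
    refine laurent_algHom_ext ?_
    simp only [AlgHom.comp_apply, laurentEval_T, zpow_one, zpow_natCast, Units.val_pow_eq_pow_val,
      map_pow]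
    exact hi.symm
  refine ⟨i, fun f hf => ?_⟩
  have hf0 : Ideal.Quotient.mkₐ K P f = 0 := Ideal.Quotient.eq_zero_iff_mem.2 (hAP hf)
  rw [heval, AlgHom.comp_apply] at hf0
  exact (map_eq_zero (algebraMap K (K[T;T⁻¹] ⧸ P))).1 hf0

end Vanishing

section AffineReflection

variable {R : Type*} [CommRing R]

/-- The substitution `T ↦ q T⁻¹`. -/
def affineReflection (q : Rˣ) : R[T;T⁻¹] →ₐ[R] R[T;T⁻¹] :=
  { eval₂ C ⟨(q : R) • T (-1), ((q⁻¹ : Rˣ) : R) • T 1,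
      by rw [smul_mul_smul_comm, T_neg_one_mul_T_one, Units.mul_inv, one_smul],
      by rw [smul_mul_smul_comm, T_one_mul_T_neg_one, Units.inv_mul, one_smul]⟩ with
    commutes' := fun r => eval₂_C C _ r }

theorem affineReflection_T_one (q : Rˣ) :
    affineReflection q (T 1 : R[T;T⁻¹]) = (q : R) • T (-1) := by
  refine (eval₂_T C _ 1).trans ?_
  rw [zpow_one]

theorem affineReflection_T_neg_one (q : Rˣ) :
    affineReflection q (T (-1) : R[T;T⁻¹]) = ((q⁻¹ : Rˣ) : R) • T 1 := by
  refine (eval₂_T C _ (-1)).trans ?_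
  rw [zpow_neg_one]
  rfl

theorem affineReflection_T (q : Rˣ) (n : ℤ) :
    affineReflection q (T n : R[T;T⁻¹]) = ((q ^ n : Rˣ) : R) • T (-n) := by
  induction n using Int.induction_on with
  | zero => simp
  | succ n ih =>
    rw [T_add, map_mul, ih, affineReflection_T_one, smul_mul_smul_comm, ← T_add, zpow_add_one,
      Units.val_mul, neg_add]
  | pred n ih =>
    rw [sub_eq_add_neg, T_add, map_mul, ih, affineReflection_T_neg_one, smul_mul_smul_comm,
      ← T_add, zpow_add, zpow_neg_one, Units.val_mul, neg_add _ (-1), neg_neg 1]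

theorem affineReflection_T_one_mul (q : Rˣ) (f : R[T;T⁻¹]) :
    affineReflection q (T 1 * f) = (q : R) • (T (-1) * affineReflection q f) := by
  rw [map_mul, affineReflection_T_one, smul_mul_assoc]

theorem affineReflection_T_neg_one_mul (q : Rˣ) (f : R[T;T⁻¹]) :
    affineReflection q (T (-1) * f) = ((q⁻¹ : Rˣ) : R) • (T 1 * affineReflection q f) := by
  rw [map_mul, affineReflection_T_neg_one, smul_mul_assoc]

theorem affineReflection_affineReflection (q : Rˣ) (f : R[T;T⁻¹]) :
    affineReflection q (affineReflection q f) = f := by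
  refine DFunLike.congr_fun (laurent_algHom_ext
    (φ := (affineReflection q).comp (affineReflection q)) (ψ := AlgHom.id R _) ?_) f
  rw [AlgHom.comp_apply, affineReflection_T_one, map_smul, affineReflection_T_neg_one, smul_smul,
    Units.mul_inv, one_smul, AlgHom.id_apply]

theorem laurentEval_affineReflection (q x : Rˣ) (f : R[T;T⁻¹]) :
    laurentEval x (affineReflection q f) = laurentEval (q * x⁻¹) f := by
  refine DFunLike.congr_fun (laurent_algHom_ext (φ := (laurentEval x).comp (affineReflection q))
    (ψ := laurentEval (q * x⁻¹)) ?_) f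
  rw [AlgHom.comp_apply, affineReflection_T_one, map_smul, laurentEval_T, laurentEval_T,
    zpow_neg_one, zpow_one, Units.val_mul, smul_eq_mul]

theorem eulerDerivation_affineReflection (q : Rˣ) (f : R[T;T⁻¹]) :
    eulerDerivation (affineReflection q f) = -affineReflection q (eulerDerivation f) :=
  DFunLike.congr_fun (laurent_linearMap_ext
    (φ := eulerDerivation.toLinearMap ∘ₗ (affineReflection q).toLinearMap)
    (ψ := -((affineReflection q).toLinearMap ∘ₗ eulerDerivation.toLinearMap)) fun n => by
      simp only [LinearMap.comp_apply, LinearMap.neg_apply, AlgHom.toLinearMap_apply,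
        Derivation.coeFn_coe, affineReflection_T, eulerDerivation_T, map_smul]
      rw [Int.cast_neg, neg_smul, smul_neg, smul_comm]) f

end AffineReflection

section DemazureLusztig

variable {K : Type*} [Field K] {t : Kˣ} {H : K[T;T⁻¹] →ₗ[K] K[T;T⁻¹]}

/-- `H` is the Demazure–Lusztig operator `t s + (t - t⁻¹) (X² - 1)⁻¹ (s - 1)`, where `X` is the
variable and `s` inverts it. The parameter `t` is the `t½` of the paper, and the defining equation
is multiplied by `X² - 1`. -/
def IsDemazureLusztig (t : Kˣ) (H : K[T;T⁻¹] →ₗ[K] K[T;T⁻¹]) : Prop :=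
  ∀ f, (T 2 - 1) * H f
    = (t : K) • ((T 2 - 1) * invert f) + ((t : K) - (t : K)⁻¹) • (invert f - f)

theorem T_two_sub_one_ne_zero {R : Type*} [CommRing R] [Nontrivial R] :
    (T 2 - 1 : R[T;T⁻¹]) ≠ 0 := by
  rw [← T_zero, sub_ne_zero]
  have h := (AddMonoidAlgebra.basis ℤ R).injective.ne (two_ne_zero (α := ℤ))
  rwa [AddMonoidAlgebra.basis_apply, AddMonoidAlgebra.basis_apply] at h

namespace IsDemazureLusztig

theorem apply_one (hH : IsDemazureLusztig t H) : H 1 = (t : K) • 1 := by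
  apply mul_left_cancel₀ T_two_sub_one_ne_zero
  rw [hH, map_one, sub_self, smul_zero, add_zero, mul_smul_comm]

theorem apply_T_one_mul (hH : IsDemazureLusztig t H) (f : K[T;T⁻¹]) :
    H (T 1 * f) = T (-1) * (H f - ((t : K) - (t : K)⁻¹) • f) := by
  apply mul_left_cancel₀ T_two_sub_one_ne_zero
  have hf := hH f
  have hT : (T 2 : K[T;T⁻¹]) = T 1 * T 1 := by rw [← T_add]; rfl
  rw [hH, map_mul, invert_T]
  simp only [Algebra.smul_def, hT] at hf ⊢
  linear_combination -T (-1) * hf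
    + algebraMap K K[T;T⁻¹] ((t : K) - (t : K)⁻¹) * T 1 * f * T_one_mul_T_neg_one (R := K)

theorem apply_apply (hH : IsDemazureLusztig t H) (f : K[T;T⁻¹]) :
    H (H f) = ((t : K) - (t : K)⁻¹) • H f + f := by
  apply mul_left_cancel₀ (mul_ne_zero T_two_sub_one_ne_zero T_two_sub_one_ne_zero)
  have hf := hH f
  have hHf := hH (H f)
  have hinv := congrArg invert hf
  simp only [map_add, map_sub, map_mul, map_smul, map_one, invert_T, involutive_invert f] at hinv
  simp only [Algebra.smul_def, map_sub] at hf hHf hinv ⊢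
  have ht : algebraMap K K[T;T⁻¹] t * algebraMap K K[T;T⁻¹] (t : K)⁻¹ = 1 := by
    rw [← map_mul, mul_inv_cancel₀ t.ne_zero, map_one]
  have hT : (T 2 * T (-2) : K[T;T⁻¹]) = 1 := by rw [← T_add, add_neg_cancel, T_zero]
  generalize algebraMap K K[T;T⁻¹] t = a at *
  generalize algebraMap K K[T;T⁻¹] (t : K)⁻¹ = b at *
  linear_combination (T 2 - 1) * hHf - T 2 * (a * T 2 - b) * hinv - (a - b) * T 2 * hf
    + (T 2 - 1) ^ 2 * f * ht + ((a * T 2 - b) * invert (H f) - (a * T 2 - b) * a * f) * hT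

theorem apply_T_neg_one_mul (hH : IsDemazureLusztig t H) (f : K[T;T⁻¹]) :
    H (T (-1) * f) = T 1 * H f + ((t : K) - (t : K)⁻¹) • (T (-1) * f) := by
  have h := hH.apply_T_one_mul (T (-1) * f)
  rw [← mul_assoc, T_one_mul_T_neg_one, one_mul] at h
  rw [h, ← mul_assoc, T_one_mul_T_neg_one, one_mul, sub_add_cancel]

theorem apply_T_one_mul_apply (hH : IsDemazureLusztig t H) (f : K[T;T⁻¹]) :
    H (T 1 * H f) = T (-1) * f := by
  rw [hH.apply_T_one_mul, hH.apply_apply, add_sub_cancel_left]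

theorem laurentEval_apply (hH : IsDemazureLusztig t H) (x : Kˣ) (f : K[T;T⁻¹]) :
    ((x : K) ^ 2 - 1) * laurentEval x (H f)
      = (t * (x : K) ^ 2 - (t : K)⁻¹) * laurentEval x⁻¹ f
        - ((t : K) - (t : K)⁻¹) * laurentEval x f := by
  have h := congrArg (laurentEval x) (hH f)
  simp only [map_add, map_sub, map_smul, map_mul, map_one, laurentEval_T, laurentEval_invert,
    smul_eq_mul, zpow_ofNat, Units.val_pow_eq_pow_val] at h
  linear_combination h

theorem laurentEval_eulerDerivation_apply (hH : IsDemazureLusztig t H) (x : Kˣ) (f : K[T;T⁻¹]) :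
    2 * (x : K) ^ 2 * laurentEval x (H f)
        + ((x : K) ^ 2 - 1) * laurentEval x (eulerDerivation (H f))
      = 2 * t * (x : K) ^ 2 * laurentEval x⁻¹ f
        - (t * (x : K) ^ 2 - (t : K)⁻¹) * laurentEval x⁻¹ (eulerDerivation f)
        - ((t : K) - (t : K)⁻¹) * laurentEval x (eulerDerivation f) := by
  have h := congrArg (fun g => laurentEval x (eulerDerivation g)) (hH f)
  simp only [map_add, map_sub, map_smul, Derivation.map_smul, map_neg, map_mul, map_one, map_zero,
    Derivation.leibniz, Derivation.map_one_eq_zero, eulerDerivation_T, eulerDerivation_invert,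
    laurentEval_T, laurentEval_invert, smul_eq_mul, zpow_ofNat, Units.val_pow_eq_pow_val,
    Int.cast_ofNat] at h
  linear_combination h

theorem laurentEval_eulerDerivation_sq_apply (hH : IsDemazureLusztig t H) (x : Kˣ)
    (f : K[T;T⁻¹]) :
    4 * (x : K) ^ 2 * laurentEval x (H f)
        + 4 * (x : K) ^ 2 * laurentEval x (eulerDerivation (H f))
        + ((x : K) ^ 2 - 1) * laurentEval x (eulerDerivation (eulerDerivation (H f)))
      = t * (4 * (x : K) ^ 2 * laurentEval x⁻¹ f
          - 4 * (x : K) ^ 2 * laurentEval x⁻¹ (eulerDerivation f)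
          + ((x : K) ^ 2 - 1) * laurentEval x⁻¹ (eulerDerivation (eulerDerivation f)))
        + ((t : K) - (t : K)⁻¹) * (laurentEval x⁻¹ (eulerDerivation (eulerDerivation f))
          - laurentEval x (eulerDerivation (eulerDerivation f))) := by
  have h := congrArg (fun g => laurentEval x (eulerDerivation (eulerDerivation g))) (hH f)
  simp only [map_add, map_sub, map_smul, Derivation.map_smul, map_neg, map_mul, map_one, map_zero,
    Derivation.leibniz, Derivation.map_one_eq_zero, eulerDerivation_T, eulerDerivation_invert,
    laurentEval_T, laurentEval_invert, smul_eq_mul, zpow_ofNat, Units.val_pow_eq_pow_val,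
    Int.cast_ofNat, neg_neg] at h
  linear_combination h

end IsDemazureLusztig

end DemazureLusztig

section DAHASubmodule

variable {K : Type*} [Field K] {q t : Kˣ} {H : K[T;T⁻¹] →ₗ[K] K[T;T⁻¹]}
  {M : Submodule K K[T;T⁻¹]}

/-- `M` is invariant under the generators `H`, `π` and `X` of the double affine Hecke algebra. -/
structure IsDAHASubmodule (q : Kˣ) (H : K[T;T⁻¹] →ₗ[K] K[T;T⁻¹]) (M : Submodule K K[T;T⁻¹]) :
    Prop where
  apply_mem : ∀ f ∈ M, H f ∈ M
  affineReflection_mem : ∀ f ∈ M, affineReflection q f ∈ M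
  T_one_mul_mem : ∀ f ∈ M, T 1 * f ∈ M

theorem mul_sq_sub_inv_eq_zero_iff (t x : Kˣ) :
    (t : K) * (x : K) ^ 2 - (t : K)⁻¹ = 0 ↔ (t * x) ^ 2 = 1 := by
  rw [sub_eq_zero, ← mul_eq_one_iff_eq_inv₀ t.ne_zero, Units.ext_iff]
  push_cast
  ring_nf

theorem sq_sub_one_eq_zero_iff (x : Kˣ) : (x : K) ^ 2 - 1 = 0 ↔ x ^ 2 = 1 := by
  rw [sub_eq_zero, Units.ext_iff]
  push_cast
  rfl

theorem inv_eq_self_of_sq_eq_one {G : Type*} [Group G] {x : G} (hx : x ^ 2 = 1) : x⁻¹ = x :=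
  inv_eq_of_mul_eq_one_left (by rw [← sq, hx])

namespace IsDAHASubmodule

theorem T_neg_one_mul_mem (hM : IsDAHASubmodule q H M) {f : K[T;T⁻¹]} (hf : f ∈ M) :
    T (-1) * f ∈ M := by
  have h := hM.affineReflection_mem _ (hM.T_one_mul_mem _ (hM.affineReflection_mem f hf))
  rw [affineReflection_T_one_mul, affineReflection_affineReflection] at h
  exact (M.smul_mem_iff q.ne_zero).1 h

theorem exists_ideal (hM : IsDAHASubmodule q H M) :
    ∃ A : Ideal K[T;T⁻¹], A.restrictScalars K = M := by
  have mul_mem (c : K[T;T⁻¹]) : ∀ f ∈ M, c * f ∈ M := by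
    induction c using laurent_induction with
    | one => exact fun f hf => by rwa [one_mul]
    | add c d hc hd => exact fun f hf => by rw [add_mul]; exact M.add_mem (hc f hf) (hd f hf)
    | smul a c hc => exact fun f hf => by rw [smul_mul_assoc]; exact M.smul_mem a (hc f hf)
    | T_one_mul c hc => exact fun f hf => by rw [mul_assoc]; exact hM.T_one_mul_mem _ (hc f hf)
    | T_neg_one_mul c hc =>
      exact fun f hf => by rw [mul_assoc]; exact hM.T_neg_one_mul_mem (hc f hf)
  exact ⟨{ M with smul_mem' := fun c f hf => mul_mem c f hf }, rfl⟩

theorem mul_inv_mem_commonZeros (hM : IsDAHASubmodule q H M) {x : Kˣ}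
    (hx : x ∈ commonZeros M) : q * x⁻¹ ∈ commonZeros M := fun f hf => by
  rw [← laurentEval_affineReflection]
  exact hx _ (hM.affineReflection_mem f hf)

theorem mul_inv_mem_commonCriticalPoints (hM : IsDAHASubmodule q H M) {x : Kˣ}
    (hx : x ∈ commonCriticalPoints M) : q * x⁻¹ ∈ commonCriticalPoints M := fun f hf => by
  have h := hx _ (hM.affineReflection_mem f hf)
  rwa [eulerDerivation_affineReflection, map_neg, laurentEval_affineReflection, neg_eq_zero] at h

theorem inv_mem_commonZeros (hM : IsDAHASubmodule q H M) (hH : IsDemazureLusztig t H) {x : Kˣ}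
    (hx : x ∈ commonZeros M) (htx : (t * x) ^ 2 ≠ 1) : x⁻¹ ∈ commonZeros M := fun f hf => by
  have h := hH.laurentEval_apply x f
  rw [hx f hf, hx _ (hM.apply_mem f hf)] at h
  refine (mul_eq_zero.1 ?_).resolve_left ((mul_sq_sub_inv_eq_zero_iff t x).not.2 htx)
  linear_combination -h

theorem inv_mem_commonCriticalPoints (hM : IsDAHASubmodule q H M) (hH : IsDemazureLusztig t H)
    {x : Kˣ} (hx : x ∈ commonZeros M) (hx' : x ∈ commonCriticalPoints M)
    (htx : (t * x) ^ 2 ≠ 1) : x⁻¹ ∈ commonCriticalPoints M := fun f hf => by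
  have h := hH.laurentEval_eulerDerivation_apply x f
  rw [hx _ (hM.apply_mem f hf), hx' _ (hM.apply_mem f hf), hx' f hf,
    hM.inv_mem_commonZeros hH hx htx f hf] at h
  refine (mul_eq_zero.1 ?_).resolve_left ((mul_sq_sub_inv_eq_zero_iff t x).not.2 htx)
  linear_combination h

theorem mem_commonCriticalPoints_of_sq_eq_one (hM : IsDAHASubmodule q H M)
    (hH : IsDemazureLusztig t H) (h2 : (2 : K) ≠ 0) (ht : t ^ 2 ≠ 1) {x : Kˣ} (hx2 : x ^ 2 = 1)
    (hx : x ∈ commonZeros M) : x ∈ commonCriticalPoints M := fun f hf => by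
  have h := hH.laurentEval_eulerDerivation_apply x f
  have hx2' : (x : K) ^ 2 = 1 := sub_eq_zero.1 ((sq_sub_one_eq_zero_iff x).2 hx2)
  rw [inv_eq_self_of_sq_eq_one hx2, hx f hf, hx _ (hM.apply_mem f hf), hx2'] at h
  have ht' : (t : K) - (t : K)⁻¹ ≠ 0 := by
    have := (mul_sq_sub_inv_eq_zero_iff t 1).not.2 (by rwa [mul_one])
    rwa [Units.val_one, one_pow, mul_one] at this
  refine (mul_eq_zero.1 ?_).resolve_left (mul_ne_zero h2 ht')
  linear_combination h

theorem inv_mem_commonZeros_of_mem_commonCriticalPoints (hM : IsDAHASubmodule q H M)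
    (hH : IsDemazureLusztig t H) (h2 : (2 : K) ≠ 0) {x : Kˣ} (hx : x ∈ commonZeros M)
    (hx' : x ∈ commonCriticalPoints M) : x⁻¹ ∈ commonZeros M := by
  by_cases htx : (t * x) ^ 2 = 1
  · intro f hf
    have h := hH.laurentEval_eulerDerivation_apply x f
    rw [hx _ (hM.apply_mem f hf), hx' _ (hM.apply_mem f hf), hx' f hf,
      (mul_sq_sub_inv_eq_zero_iff t x).2 htx] at h
    refine (mul_eq_zero.1 ?_).resolve_left
      (mul_ne_zero (mul_ne_zero h2 t.ne_zero) (pow_ne_zero 2 x.ne_zero))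
    linear_combination -h
  · exact hM.inv_mem_commonZeros hH hx htx

end IsDAHASubmodule

end DAHASubmodule

section VanishingInvariant

variable {K : Type*} [Field K] {q t : Kˣ} {H : K[T;T⁻¹] →ₗ[K] K[T;T⁻¹]} {s e : Set Kˣ}

theorem laurentEval_demazureLusztig_eq_zero (hH : IsDemazureLusztig t H) (h2 : (2 : K) ≠ 0)
    (hs_inv : ∀ x ∈ s, x⁻¹ ∈ s) (he_sq : ∀ x ∈ s, x ^ 2 = 1 → x ∈ e) {f : K[T;T⁻¹]}
    (hf : f ∈ vanishingSubmodule s e) {x : Kˣ} (hx : x ∈ s) : laurentEval x (H f) = 0 := by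
  obtain ⟨hf0, hf1⟩ := hf
  by_cases hx2 : x ^ 2 = 1
  · have h := hH.laurentEval_eulerDerivation_apply x f
    have hx2' : (x : K) ^ 2 = 1 := sub_eq_zero.1 ((sq_sub_one_eq_zero_iff x).2 hx2)
    rw [inv_eq_self_of_sq_eq_one hx2, hf0 x hx, hf1 x (he_sq x hx hx2), hx2'] at h
    refine (mul_eq_zero.1 ?_).resolve_left h2
    linear_combination h
  · have h := hH.laurentEval_apply x f
    rw [hf0 x hx, hf0 _ (hs_inv x hx)] at h
    refine (mul_eq_zero.1 ?_).resolve_left ((sq_sub_one_eq_zero_iff x).not.2 hx2)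
    linear_combination h

theorem laurentEval_eulerDerivation_demazureLusztig_eq_zero (hH : IsDemazureLusztig t H)
    (h2 : (2 : K) ≠ 0) (hes : e ⊆ s) (hs_inv : ∀ x ∈ s, x⁻¹ ∈ s)
    (he_sq : ∀ x ∈ s, x ^ 2 = 1 → x ∈ e) (he_inv : ∀ x ∈ e, (t * x) ^ 2 ≠ 1 → x⁻¹ ∈ e)
    {f : K[T;T⁻¹]} (hf : f ∈ vanishingSubmodule s e) {x : Kˣ} (hx : x ∈ e) :
    laurentEval x (eulerDerivation (H f)) = 0 := by
  have hHf := laurentEval_demazureLusztig_eq_zero hH h2 hs_inv he_sq hf (hes hx)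
  obtain ⟨hf0, hf1⟩ := hf
  by_cases hx2 : x ^ 2 = 1
  · have h := hH.laurentEval_eulerDerivation_sq_apply x f
    have hx2' : (x : K) ^ 2 = 1 := sub_eq_zero.1 ((sq_sub_one_eq_zero_iff x).2 hx2)
    rw [inv_eq_self_of_sq_eq_one hx2, hHf, hf0 x (hes hx), hf1 x hx, hx2'] at h
    refine (mul_eq_zero.1 ?_).resolve_left (mul_ne_zero h2 h2)
    linear_combination h
  · have h := hH.laurentEval_eulerDerivation_apply x f
    have hcoef : ((t : K) * (x : K) ^ 2 - (t : K)⁻¹) * laurentEval x⁻¹ (eulerDerivation f) = 0 := by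
      rw [mul_eq_zero, mul_sq_sub_inv_eq_zero_iff]
      exact or_iff_not_imp_left.2 fun htx => hf1 _ (he_inv x hx htx)
    rw [hcoef, hHf, hf0 _ (hs_inv x (hes hx)), hf1 x hx] at h
    refine (mul_eq_zero.1 ?_).resolve_left ((sq_sub_one_eq_zero_iff x).not.2 hx2)
    linear_combination h

theorem isDAHASubmodule_vanishingSubmodule (hH : IsDemazureLusztig t H) (h2 : (2 : K) ≠ 0)
    (hes : e ⊆ s) (hs_inv : ∀ x ∈ s, x⁻¹ ∈ s) (hs_refl : ∀ x ∈ s, q * x⁻¹ ∈ s)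
    (he_sq : ∀ x ∈ s, x ^ 2 = 1 → x ∈ e) (he_inv : ∀ x ∈ e, (t * x) ^ 2 ≠ 1 → x⁻¹ ∈ e)
    (he_refl : ∀ x ∈ e, q * x⁻¹ ∈ e) : IsDAHASubmodule q H (vanishingSubmodule s e) where
  apply_mem f hf :=
    ⟨fun _ hx => laurentEval_demazureLusztig_eq_zero hH h2 hs_inv he_sq hf hx, fun _ hx =>
      laurentEval_eulerDerivation_demazureLusztig_eq_zero hH h2 hes hs_inv he_sq he_inv hf hx⟩
  affineReflection_mem f hf := by
    refine ⟨fun x hx => ?_, fun x hx => ?_⟩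
    · rw [laurentEval_affineReflection, hf.1 _ (hs_refl x hx)]
    · rw [eulerDerivation_affineReflection, map_neg, laurentEval_affineReflection,
        hf.2 _ (he_refl x hx), neg_zero]
  T_one_mul_mem f hf := by
    refine ⟨fun x hx => by rw [map_mul, hf.1 x hx, mul_zero], fun x hx => ?_⟩
    rw [Derivation.leibniz, smul_eq_mul, smul_eq_mul, map_add, map_mul, map_mul, hf.2 x hx,
      hf.1 x (hes hx), mul_zero, zero_mul, add_zero]

end VanishingInvariant

section RootOfUnity

variable {K : Type*} [Field K] {q : Kˣ} {N : ℕ} {k : ℤ} {H : K[T;T⁻¹] →ₗ[K] K[T;T⁻¹]}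
  {M : Submodule K K[T;T⁻¹]}

theorem not_dvd_of_sub_lt_of_lt {n a m : ℤ} (ha : n ∣ a) (h₁ : a - n < m) (h₂ : m < a) :
    ¬ n ∣ m := fun hm => by
  have := Int.le_of_dvd (sub_pos.2 h₂) (dvd_sub ha hm)
  omega

theorem zpow_one_sub {G : Type*} [Group G] (g : G) (n : ℤ) : g ^ (1 - n) = g * (g ^ n)⁻¹ := by
  rw [zpow_sub, zpow_one]

theorem zpow_sq_eq_one_iff (hq : IsPrimitiveRoot q (2 * N)) (j : ℤ) :
    (q ^ j) ^ 2 = 1 ↔ (N : ℤ) ∣ j := by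
  rw [← zpow_natCast, ← zpow_mul, mul_comm, hq.zpow_eq_one_iff_dvd, Nat.cast_mul]
  exact mul_dvd_mul_iff_left two_ne_zero

theorem zpow_mul_zpow_sq_eq_one_iff (hq : IsPrimitiveRoot q (2 * N)) (k j : ℤ) :
    (q ^ k * q ^ j) ^ 2 = 1 ↔ (N : ℤ) ∣ k + j := by
  rw [← zpow_add, zpow_sq_eq_one_iff hq]

theorem zpow_eq_zpow_of_dvd_sub (hq : IsPrimitiveRoot q (2 * N)) {i j : ℤ}
    (h : (2 * N : ℤ) ∣ i - j) : q ^ i = q ^ j := by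
  rw [← mul_inv_eq_one, ← zpow_sub, hq.zpow_eq_one_iff_dvd]
  exact_mod_cast h

theorem two_ne_zero_of_isPrimitiveRoot (hq : IsPrimitiveRoot q (2 * N)) (hN : 0 < N) :
    (2 : K) ≠ 0 := by
  have : NeZero (2 * N) := ⟨by omega⟩
  have h := (IsPrimitiveRoot.coe_units_iff.2 hq).neZero'.ne
  rw [Nat.cast_mul] at h
  exact_mod_cast left_ne_zero_of_mul h

/-- The exponents `j` for which the elements of the radical vanish doubly at `q ^ j`: those in an
interval `(a + k, a - k]` around a multiple `a` of `N`, where `k < 0`. -/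
def doubleExponents (N : ℕ) (k : ℤ) : Set ℤ :=
  {j | ∃ a : ℤ, (N : ℤ) ∣ a ∧ a + k < j ∧ j ≤ a - k}

/-- The Laurent polynomials that vanish at all powers of `q`, and doubly at the powers with exponent
in `doubleExponents N k`. It is identified below with the radical of the duality pairing. -/
def doubleZeroSubmodule (q : Kˣ) (N : ℕ) (k : ℤ) : Submodule K K[T;T⁻¹] :=
  vanishingSubmodule (Set.range (q ^ · : ℤ → Kˣ)) ((q ^ ·) '' doubleExponents N k)

theorem isDAHASubmodule_doubleZeroSubmodule (hq : IsPrimitiveRoot q (2 * N)) (hN : 0 < N)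
    (hk : k < 0) (hH : IsDemazureLusztig (q ^ k) H) :
    IsDAHASubmodule q H (doubleZeroSubmodule q N k) := by
  refine isDAHASubmodule_vanishingSubmodule hH (two_ne_zero_of_isPrimitiveRoot hq hN)
    (Set.image_subset_range _ _) ?_ ?_ ?_ ?_ ?_
  · rintro _ ⟨j, rfl⟩
    exact ⟨-j, zpow_neg q j⟩
  · rintro _ ⟨j, rfl⟩
    exact ⟨1 - j, zpow_one_sub q j⟩
  · rintro _ ⟨j, rfl⟩ hj
    exact ⟨j, ⟨j, (zpow_sq_eq_one_iff hq j).1 hj, by omega, by omega⟩, rfl⟩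
  · rintro _ ⟨j, ⟨a, ha, haj, hja⟩, rfl⟩ hj
    have hne : j ≠ a - k := by
      rintro rfl
      exact hj ((zpow_mul_zpow_sq_eq_one_iff hq k _).2 (by rwa [add_sub_cancel]))
    exact ⟨-j, ⟨-a, dvd_neg.2 ha, by omega, by omega⟩, zpow_neg q j⟩
  · rintro _ ⟨j, ⟨a, ha, haj, hja⟩, rfl⟩
    exact ⟨1 - j, ⟨-a, dvd_neg.2 ha, by omega, by omega⟩, zpow_one_sub q j⟩

namespace IsDAHASubmodule

theorem zpow_one_sub_mem_commonZeros (hM : IsDAHASubmodule q H M) {j : ℤ}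
    (hj : q ^ j ∈ commonZeros M) : q ^ (1 - j) ∈ commonZeros M := by
  rw [zpow_one_sub]
  exact hM.mul_inv_mem_commonZeros hj

theorem zpow_one_sub_mem_commonCriticalPoints (hM : IsDAHASubmodule q H M) {j : ℤ}
    (hj : q ^ j ∈ commonCriticalPoints M) : q ^ (1 - j) ∈ commonCriticalPoints M := by
  rw [zpow_one_sub]
  exact hM.mul_inv_mem_commonCriticalPoints hj

theorem zpow_mem_commonZeros_of_le (hM : IsDAHASubmodule q H M) (hq : IsPrimitiveRoot q (2 * N))
    (hH : IsDemazureLusztig (q ^ k) H) {a i j : ℤ} (ha : (N : ℤ) ∣ a) (hai : a - N - k < i)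
    (hij : i ≤ j) (hja : j ≤ a - k) (hi : q ^ i ∈ commonZeros M) : q ^ j ∈ commonZeros M := by
  induction j, hij using Int.leInduction with
  | base => exact hi
  | succ m him ih =>
    have hm : (q ^ k * q ^ m) ^ 2 ≠ 1 := (zpow_mul_zpow_sq_eq_one_iff hq k m).not.2
      (not_dvd_of_sub_lt_of_lt ha (by omega) (by omega))
    have h := hM.inv_mem_commonZeros hH (ih (by omega)) hm
    rw [← zpow_neg] at h
    simpa only [sub_neg_eq_add, add_comm] using hM.zpow_one_sub_mem_commonZeros h

theorem zpow_mem_commonCriticalPoints_of_le (hM : IsDAHASubmodule q H M)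
    (hq : IsPrimitiveRoot q (2 * N)) (hH : IsDemazureLusztig (q ^ k) H) {a i j : ℤ}
    (ha : (N : ℤ) ∣ a) (hai : a - N - k < i) (hij : i ≤ j) (hja : j ≤ a - k)
    (hi : q ^ i ∈ commonZeros M) (hi' : q ^ i ∈ commonCriticalPoints M) :
    q ^ j ∈ commonCriticalPoints M := by
  induction j, hij using Int.leInduction with
  | base => exact hi'
  | succ m him ih =>
    have hm : (q ^ k * q ^ m) ^ 2 ≠ 1 := (zpow_mul_zpow_sq_eq_one_iff hq k m).not.2
      (not_dvd_of_sub_lt_of_lt ha (by omega) (by omega))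
    have h := hM.inv_mem_commonCriticalPoints hH
      (hM.zpow_mem_commonZeros_of_le hq hH ha hai him (by omega) hi) (ih (by omega)) hm
    rw [← zpow_neg] at h
    simpa only [sub_neg_eq_add, add_comm] using hM.zpow_one_sub_mem_commonCriticalPoints h

theorem exists_dvd_zpow_mem_commonZeros (hM : IsDAHASubmodule q H M)
    (hq : IsPrimitiveRoot q (2 * N)) (hk1 : -(N : ℤ) ≤ 2 * k) (hk2 : k < 0)
    (hH : IsDemazureLusztig (q ^ k) H) {j : ℤ} (hj : q ^ j ∈ commonZeros M) :
    ∃ a : ℤ, (N : ℤ) ∣ a ∧ q ^ a ∈ commonZeros M := by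
  obtain ⟨a, ha, haj, hja⟩ : ∃ a : ℤ, (N : ℤ) ∣ a ∧ a - N < j ∧ j ≤ a := by
    have hN : (0 : ℤ) < N := by omega
    have hdiv := Int.emod_add_mul_ediv (-j) N
    have hnonneg := Int.emod_nonneg (-j) hN.ne'
    have hlt := Int.emod_lt_of_pos (-j) hN
    exact ⟨-(N * (-j / N)), dvd_neg.2 (dvd_mul_right _ _), by omega, by omega⟩
  rcases lt_or_ge (a - N - k) j with h | h
  · exact ⟨a, ha, hM.zpow_mem_commonZeros_of_le hq hH ha h hja (by omega) hj⟩
  · exact ⟨N - a, dvd_sub_self_left.2 ha, hM.zpow_mem_commonZeros_of_le hq hH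
      (dvd_sub_self_left.2 ha) (by omega) (by omega) (by omega)
      (hM.zpow_one_sub_mem_commonZeros hj)⟩

theorem zpow_mem_commonCriticalPoints_of_dvd (hM : IsDAHASubmodule q H M)
    (hq : IsPrimitiveRoot q (2 * N)) (hk1 : -(N : ℤ) ≤ 2 * k) (hk2 : k < 0)
    (hH : IsDemazureLusztig (q ^ k) H) {a j : ℤ} (ha : (N : ℤ) ∣ a) (hZ : q ^ a ∈ commonZeros M)
    (haj : a ≤ j) (hja : j ≤ a - k) : q ^ j ∈ commonCriticalPoints M := by
  have hk : ¬ (N : ℤ) ∣ k := not_dvd_of_sub_lt_of_lt (dvd_zero _) (by omega) hk2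
  have ha' := hM.mem_commonCriticalPoints_of_sq_eq_one hH
    (two_ne_zero_of_isPrimitiveRoot hq (by omega)) ((zpow_sq_eq_one_iff hq k).not.2 hk)
    ((zpow_sq_eq_one_iff hq a).2 ha) hZ
  exact hM.zpow_mem_commonCriticalPoints_of_le hq hH ha (by omega) haj hja hZ ha'

/- At `a - k` the reflection `x ↦ x⁻¹` is blocked for simple zeros, but `q ^ (a - k)` is a double
zero, and the derivative of the Demazure–Lusztig relation carries its value across. -/
theorem zpow_mem_commonZeros_of_dvd_of_le (hM : IsDAHASubmodule q H M)
    (hq : IsPrimitiveRoot q (2 * N)) (hk1 : -(N : ℤ) ≤ 2 * k) (hk2 : k < 0)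
    (hH : IsDemazureLusztig (q ^ k) H) {a j : ℤ} (ha : (N : ℤ) ∣ a) (hZ : q ^ a ∈ commonZeros M)
    (haj : a ≤ j) (hja : j ≤ a + N) : q ^ j ∈ commonZeros M := by
  rcases le_or_gt j (a - k) with h | h
  · exact hM.zpow_mem_commonZeros_of_le hq hH ha (by omega) haj h hZ
  · have hlast := hM.zpow_mem_commonZeros_of_le hq hH ha (by omega) (by omega) le_rfl hZ
    have hcross := hM.inv_mem_commonZeros_of_mem_commonCriticalPoints hH
      (two_ne_zero_of_isPrimitiveRoot hq (by omega)) hlast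
      (hM.zpow_mem_commonCriticalPoints_of_dvd hq hk1 hk2 hH ha hZ (by omega) le_rfl)
    rw [← zpow_neg] at hcross
    exact hM.zpow_mem_commonZeros_of_le hq hH (dvd_add_self_right.2 ha) (by omega) (by omega)
      (by omega) (hM.zpow_one_sub_mem_commonZeros hcross)

theorem zpow_mem_commonZeros_of_dvd (hM : IsDAHASubmodule q H M)
    (hq : IsPrimitiveRoot q (2 * N)) (hk1 : -(N : ℤ) ≤ 2 * k) (hk2 : k < 0)
    (hH : IsDemazureLusztig (q ^ k) H) {j : ℤ} (hj : q ^ j ∈ commonZeros M) {b : ℤ}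
    (hb : (N : ℤ) ∣ b) : q ^ b ∈ commonZeros M := by
  obtain ⟨a, ha, hZ⟩ := hM.exists_dvd_zpow_mem_commonZeros hq hk1 hk2 hH hj
  obtain ⟨c, hc⟩ := dvd_sub hb ha
  rcases Int.even_or_odd' c with ⟨d, rfl | rfl⟩
  · rwa [zpow_eq_zpow_of_dvd_sub hq (j := a) ⟨d, by rw [hc]; ring⟩]
  · rw [zpow_eq_zpow_of_dvd_sub hq (j := a + N) ⟨d, by linear_combination hc⟩]
    exact hM.zpow_mem_commonZeros_of_dvd_of_le hq hk1 hk2 hH ha hZ (by omega) le_rfl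

theorem le_doubleZeroSubmodule (hM : IsDAHASubmodule q H M) (hq : IsPrimitiveRoot q (2 * N))
    (hk1 : -(N : ℤ) ≤ 2 * k) (hk2 : k < 0) (hH : IsDemazureLusztig (q ^ k) H) {i : ℤ}
    (hi : q ^ i ∈ commonZeros M) : M ≤ doubleZeroSubmodule q N k := by
  have hZ {b : ℤ} (hb : (N : ℤ) ∣ b) : q ^ b ∈ commonZeros M :=
    hM.zpow_mem_commonZeros_of_dvd hq hk1 hk2 hH hi hb
  refine le_vanishingSubmodule ?_ ?_
  · rintro _ ⟨j, rfl⟩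
    have hN : (0 : ℤ) < N := by omega
    have hdiv := Int.emod_add_mul_ediv j N
    have hnonneg := Int.emod_nonneg j hN.ne'
    have hlt := Int.emod_lt_of_pos j hN
    exact hM.zpow_mem_commonZeros_of_dvd_of_le hq hk1 hk2 hH (dvd_mul_right (N : ℤ) (j / N))
      (hZ (dvd_mul_right _ _)) (by omega) (by omega)
  · rintro _ ⟨j, ⟨a, ha, haj, hja⟩, rfl⟩
    rcases le_or_gt a j with h | h
    · exact hM.zpow_mem_commonCriticalPoints_of_dvd hq hk1 hk2 hH ha (hZ ha) h hja
    · have hna : (N : ℤ) ∣ -a := dvd_neg.2 ha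
      have hrefl := hM.zpow_mem_commonCriticalPoints_of_dvd hq hk1 hk2 hH hna (hZ hna)
        (j := 1 - j) (by omega) (by omega)
      simpa only [sub_sub_cancel] using hM.zpow_one_sub_mem_commonCriticalPoints hrefl

theorem eq_doubleZeroSubmodule_or_eq_top (hM : IsDAHASubmodule q H M)
    (hq : IsPrimitiveRoot q (2 * N)) (hk1 : -(N : ℤ) ≤ 2 * k) (hk2 : k < 0)
    (hH : IsDemazureLusztig (q ^ k) H) (hle : doubleZeroSubmodule q N k ≤ M) :
    M = doubleZeroSubmodule q N k ∨ M = ⊤ := by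
  refine or_iff_not_imp_right.2 fun hne => le_antisymm ?_ hle
  obtain ⟨A, rfl⟩ := hM.exists_ideal
  have hA : A ≠ ⊤ := by
    rintro rfl
    exact hne rfl
  have hmem : (T ((2 * N : ℕ) : ℤ) - 1) ^ 2 ∈ A := by
    refine hle (sq_mem_vanishingSubmodule (Set.image_subset_range _ _) ?_)
    rintro _ ⟨j, rfl⟩
    have hj : (q ^ j) ^ (2 * N) = 1 := by
      rw [← zpow_natCast, zpow_comm, zpow_natCast, hq.pow_eq_one, one_zpow]
    simp only [map_sub, map_one, laurentEval_T, zpow_natCast, hj, Units.val_one, sub_self]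
  obtain ⟨j, hj⟩ := exists_zpow_mem_commonZeros hA (by omega) hq hmem
  exact hM.le_doubleZeroSubmodule hq hk1 hk2 hH hj

end IsDAHASubmodule

end RootOfUnity

section Dimension

variable {K : Type*} [Field K] {q : Kˣ} {N : ℕ} {k : ℤ}

theorem injOn_zpow_Ioc {G : Type*} [Group G] {g : G} {n : ℕ} (hg : orderOf g = n) (m : ℤ) :
    Set.InjOn (g ^ · : ℤ → G) (Set.Ioc m (m + n)) := fun i hi j hj hij => by
  have h : (n : ℤ) ∣ i - j := by
    rw [← hg, orderOf_dvd_iff_zpow_eq_one, zpow_sub, mul_inv_eq_one]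
    exact hij
  have habs : |i - j| < n := by rw [abs_lt]; constructor <;> linarith [hi.1, hi.2, hj.1, hj.2]
  exact sub_eq_zero.1 (Int.eq_zero_of_abs_lt_dvd h habs)

theorem image_zpow_doubleExponents (hq : IsPrimitiveRoot q (2 * N)) :
    (q ^ · : ℤ → Kˣ) '' doubleExponents N k
      = (q ^ ·) '' (Set.Ioc k (-k) ∪ Set.Ioc (N + k) (N - k)) := by
  apply Set.Subset.antisymm
  · rintro _ ⟨j, ⟨_, ⟨c, rfl⟩, haj, hja⟩, rfl⟩
    rcases Int.even_or_odd' c with ⟨d, rfl | rfl⟩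
    · refine ⟨j - N * (2 * d), Or.inl ⟨by linarith, by linarith⟩, ?_⟩
      exact zpow_eq_zpow_of_dvd_sub hq ⟨-d, by ring⟩
    · refine ⟨j - N * (2 * d), Or.inr ⟨by linarith, by linarith⟩, ?_⟩
      exact zpow_eq_zpow_of_dvd_sub hq ⟨-d, by ring⟩
  · refine Set.image_mono (Set.union_subset (fun j hj => ?_) fun j hj => ?_)
    · exact ⟨0, dvd_zero _, by linarith [hj.1], by linarith [hj.2]⟩
    · exact ⟨N, dvd_rfl, hj.1, hj.2⟩

theorem ncard_Ioc_union_Ioc (hk1 : -(N : ℤ) ≤ 2 * k) (hk2 : k < 0) :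
    (Set.Ioc k (-k) ∪ Set.Ioc (N + k) (N - k)).ncard = 4 * k.natAbs := by
  have hdisj : Disjoint (Set.Ioc k (-k)) (Set.Ioc (N + k) (N - k)) :=
    Set.disjoint_left.2 fun j hj hj' => by linarith [hj.2, hj'.1]
  rw [Set.ncard_union_eq hdisj, ← Finset.coe_Ioc, ← Finset.coe_Ioc, Set.ncard_coe_finset,
    Set.ncard_coe_finset, Int.card_Ioc, Int.card_Ioc]
  omega

theorem finrank_quotient_doubleZeroSubmodule (hq : IsPrimitiveRoot q (2 * N))
    (hk1 : -(N : ℤ) ≤ 2 * k) (hk2 : k < 0) :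
    Module.finrank K (K[T;T⁻¹] ⧸ doubleZeroSubmodule q N k) = 2 * N + 4 * k.natAbs := by
  have hcard : (Set.range (q ^ · : ℤ → Kˣ)).ncard = 2 * N := by
    rw [← Subgroup.coe_zpowers, ← Nat.card_coe_set_eq]
    exact (Nat.card_zpowers q).trans hq.eq_orderOf.symm
  have hfin : (Set.range (q ^ · : ℤ → Kˣ)).Finite := Set.finite_of_ncard_pos (by omega)
  have hinj : Set.InjOn (q ^ · : ℤ → Kˣ) (Set.Ioc k (-k) ∪ Set.Ioc (N + k) (N - k)) := by
    refine (injOn_zpow_Ioc hq.eq_orderOf.symm k).mono (Set.union_subset ?_ ?_) <;>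
    · refine Set.Ioc_subset_Ioc ?_ ?_ <;> push_cast <;> omega
  rw [doubleZeroSubmodule,
    finrank_quotient_vanishingSubmodule hfin (Set.image_subset_range _ _), hcard,
    image_zpow_doubleExponents hq, hinj.ncard_image, ncard_Ioc_union_Ioc hk1 hk2]

end Dimension

section DualityPairing

variable {K : Type*} [Field K] {q t : Kˣ} {H : K[T;T⁻¹] →ₗ[K] K[T;T⁻¹]}
  {B : K[T;T⁻¹] →ₗ[K] K[T;T⁻¹] →ₗ[K] K} {M : Submodule K K[T;T⁻¹]}

theorem IsDemazureLusztig.laurentEval_inv_apply (hH : IsDemazureLusztig t H) (f : K[T;T⁻¹]) :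
    laurentEval t⁻¹ (H f) = t * laurentEval t⁻¹ f := by
  by_cases ht : t ^ 2 = 1
  · have htt : (t : K)⁻¹ = t := by rw [← Units.val_inv_eq_inv_val, inv_eq_self_of_sq_eq_one ht]
    have hHf : H f = (t : K) • invert f := by
      apply mul_left_cancel₀ T_two_sub_one_ne_zero
      rw [hH f, htt, sub_self, zero_smul, add_zero, mul_smul_comm]
    rw [hHf, map_smul, laurentEval_invert, inv_inv, inv_eq_self_of_sq_eq_one ht, smul_eq_mul]
  · have h := hH.laurentEval_apply t⁻¹ f
    have ht' : ((t⁻¹ : Kˣ) : K) ^ 2 - 1 ≠ 0 :=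
      (sq_sub_one_eq_zero_iff _).not.2 (by rwa [inv_pow, inv_eq_one])
    refine mul_left_cancel₀ ht' (h.trans ?_)
    rw [Units.val_inv_eq_inv_val]
    field_simp
    ring

/-- `B` is the duality pairing: `B 1` is the evaluation at `t⁻¹`, and multiplication by `X` in the
first argument is adjoint to the inverse of `Y = π H` in the second. -/
structure IsDualityPairing (q t : Kˣ) (H : K[T;T⁻¹] →ₗ[K] K[T;T⁻¹])
    (B : K[T;T⁻¹] →ₗ[K] K[T;T⁻¹] →ₗ[K] K) : Prop where
  one_left : ∀ g, B 1 g = laurentEval t⁻¹ g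
  T_one_mul_left_apply : ∀ f g, B (T 1 * f) (affineReflection q (H g)) = B f g

namespace IsDualityPairing

theorem T_neg_one_mul_left (hB : IsDualityPairing q t H B) (f g : K[T;T⁻¹]) :
    B (T (-1) * f) g = B f (affineReflection q (H g)) := by
  rw [← hB.T_one_mul_left_apply, ← mul_assoc, T_one_mul_T_neg_one, one_mul]

theorem T_one_mul_left (hB : IsDualityPairing q t H B) (hH : IsDemazureLusztig t H)
    (f g : K[T;T⁻¹]) : B (T 1 * f) g
      = B f (H (affineReflection q g) - ((t : K) - (t : K)⁻¹) • affineReflection q g) := by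
  rw [← hB.T_one_mul_left_apply f (_ - _), map_sub, map_smul, hH.apply_apply, add_sub_cancel_left,
    affineReflection_affineReflection]

theorem apply_left (hB : IsDualityPairing q t H B) (hH : IsDemazureLusztig t H)
    (f g : K[T;T⁻¹]) : B (H f) g = B f (H g) := by
  induction f using laurent_induction generalizing g with
  | one => rw [hH.apply_one, map_smul, LinearMap.smul_apply, hB.one_left, hB.one_left,
      hH.laurentEval_inv_apply, smul_eq_mul]
  | add f f' hf hf' => simp only [map_add, LinearMap.add_apply, hf, hf']
  | smul a f hf => simp only [map_smul, LinearMap.smul_apply, hf]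
  | T_one_mul f hf =>
    rw [hH.apply_T_one_mul, hB.T_neg_one_mul_left, hB.T_one_mul_left hH]
    simp only [map_sub, map_smul, LinearMap.sub_apply, LinearMap.smul_apply, hf]
  | T_neg_one_mul f hf =>
    rw [hH.apply_T_neg_one_mul, hB.T_neg_one_mul_left, map_add, map_smul, LinearMap.add_apply,
      LinearMap.smul_apply, hB.T_one_mul_left hH, hB.T_neg_one_mul_left, hf, map_sub, map_smul,
      hH.apply_apply, hH.apply_apply, add_sub_cancel_left, map_add, map_smul, map_add, map_smul,
      add_comm]

theorem affineReflection_left (hB : IsDualityPairing q t H B) (hH : IsDemazureLusztig t H)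
    (f g : K[T;T⁻¹]) : B (affineReflection q f) g = B f (T 1 * H g) := by
  induction f using laurent_induction generalizing g with
  | one =>
    rw [map_one, hB.one_left, hB.one_left, map_mul, hH.laurentEval_inv_apply, laurentEval_T,
      zpow_one, Units.inv_mul_cancel_left]
  | add f f' hf hf' => simp only [map_add, LinearMap.add_apply, hf, hf']
  | smul a f hf => simp only [map_smul, LinearMap.smul_apply, hf]
  | T_one_mul f hf =>
    rw [affineReflection_T_one_mul, map_smul, LinearMap.smul_apply, hB.T_neg_one_mul_left, hf,
      hB.T_one_mul_left hH, affineReflection_T_one_mul, map_smul, hH.apply_T_neg_one_mul,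
      smul_comm _ (q : K), ← smul_sub, add_sub_cancel_right, map_smul]
  | T_neg_one_mul f hf =>
    rw [affineReflection_T_neg_one_mul, map_smul, LinearMap.smul_apply, hB.T_one_mul_left hH, hf,
      map_sub, map_smul, hH.apply_apply, add_sub_cancel_left, hB.T_neg_one_mul_left,
      hH.apply_T_one_mul_apply, affineReflection_T_neg_one_mul, map_smul]

theorem T_neg_one_mul_right (hB : IsDualityPairing q t H B) (hH : IsDemazureLusztig t H)
    (f g : K[T;T⁻¹]) : B f (T (-1) * g) = B (affineReflection q (H f)) g := by
  rw [hB.affineReflection_left hH, hB.apply_left hH, hH.apply_T_one_mul_apply]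

theorem T_one_mul_right (hB : IsDualityPairing q t H B) (hH : IsDemazureLusztig t H)
    (f g : K[T;T⁻¹]) : B f (T 1 * g)
      = B (H (affineReflection q f) - ((t : K) - (t : K)⁻¹) • affineReflection q f) g := by
  rw [map_sub, map_smul, LinearMap.sub_apply, LinearMap.smul_apply, hB.apply_left hH,
    ← map_smul, ← map_sub, hB.affineReflection_left hH, map_sub, map_smul, hH.apply_apply,
    add_sub_cancel_left]

theorem one_right (hB : IsDualityPairing q t H B) (hH : IsDemazureLusztig t H)
    (f : K[T;T⁻¹]) : B f 1 = laurentEval t⁻¹ f := by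
  induction f using laurent_induction with
  | one => exact hB.one_left 1
  | add f f' hf hf' => rw [map_add, map_add, LinearMap.add_apply, hf, hf']
  | smul a f hf => rw [map_smul, map_smul, LinearMap.smul_apply, hf]
  | T_one_mul f hf =>
    rw [hB.T_one_mul_left hH, map_one, hH.apply_one, ← sub_smul, sub_sub_cancel, map_smul, hf,
      map_mul, laurentEval_T, zpow_one, Units.val_inv_eq_inv_val, smul_eq_mul]
  | T_neg_one_mul f hf =>
    rw [hB.T_neg_one_mul_left, hH.apply_one, map_smul, map_one, map_smul, hf, map_mul,
      laurentEval_T, zpow_neg_one, inv_inv, smul_eq_mul]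

theorem inv_mem_commonZeros_ker (hB : IsDualityPairing q t H B) (hH : IsDemazureLusztig t H) :
    t⁻¹ ∈ commonZeros (B.ker) := fun f hf => by
  rw [← hB.one_right hH, LinearMap.mem_ker.1 hf, LinearMap.zero_apply]

theorem isDAHASubmodule_ker (hB : IsDualityPairing q t H B) (hH : IsDemazureLusztig t H) :
    IsDAHASubmodule q H (B.ker) where
  apply_mem f hf := LinearMap.ext fun g => by
    rw [hB.apply_left hH, LinearMap.mem_ker.1 hf]; rfl
  affineReflection_mem f hf := LinearMap.ext fun g => by
    rw [hB.affineReflection_left hH, LinearMap.mem_ker.1 hf]; rfl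
  T_one_mul_mem f hf := LinearMap.ext fun g => by
    rw [hB.T_one_mul_left hH, LinearMap.mem_ker.1 hf]; rfl

theorem le_ker (hB : IsDualityPairing q t H B) (hH : IsDemazureLusztig t H)
    (hM : IsDAHASubmodule q H M) (ht : t⁻¹ ∈ commonZeros M) : M ≤ B.ker := by
  have key (g : K[T;T⁻¹]) : ∀ f ∈ M, B f g = 0 := by
    induction g using laurent_induction with
    | one => exact fun f hf => (hB.one_right hH f).trans (ht f hf)
    | add g g' hg hg' => exact fun f hf => by rw [map_add, hg f hf, hg' f hf, add_zero]
    | smul a g hg => exact fun f hf => by rw [map_smul, hg f hf, smul_zero]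
    | T_one_mul g hg =>
      intro f hf
      have hπf := hM.affineReflection_mem f hf
      rw [hB.T_one_mul_right hH]
      exact hg _ (M.sub_mem (hM.apply_mem _ hπf) (M.smul_mem _ hπf))
    | T_neg_one_mul g hg =>
      intro f hf
      rw [hB.T_neg_one_mul_right hH]
      exact hg _ (hM.affineReflection_mem _ (hM.apply_mem f hf))
  exact fun f hf => LinearMap.ext fun g => key g f hf

theorem ker_eq_doubleZeroSubmodule {N : ℕ} {k : ℤ} (hB : IsDualityPairing q (q ^ k) H B)
    (hH : IsDemazureLusztig (q ^ k) H) (hq : IsPrimitiveRoot q (2 * N))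
    (hk1 : -(N : ℤ) ≤ 2 * k) (hk2 : k < 0) :
    B.ker = doubleZeroSubmodule q N k := by
  apply le_antisymm
  · have ht := hB.inv_mem_commonZeros_ker hH
    rw [← zpow_neg] at ht
    exact (hB.isDAHASubmodule_ker hH).le_doubleZeroSubmodule hq hk1 hk2 hH ht
  · refine hB.le_ker hH (isDAHASubmodule_doubleZeroSubmodule hq (by omega) hk2 hH) fun f hf => ?_
    exact hf.1 _ ⟨-k, zpow_neg q k⟩

theorem eq_ker_or_eq_top {N : ℕ} {k : ℤ} (hB : IsDualityPairing q (q ^ k) H B)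
    (hH : IsDemazureLusztig (q ^ k) H) (hq : IsPrimitiveRoot q (2 * N))
    (hk1 : -(N : ℤ) ≤ 2 * k) (hk2 : k < 0) (hM : IsDAHASubmodule q H M)
    (hle : B.ker ≤ M) : M = B.ker ∨ M = ⊤ := by
  rw [hB.ker_eq_doubleZeroSubmodule hH hq hk1 hk2] at hle ⊢
  exact hM.eq_doubleZeroSubmodule_or_eq_top hq hk1 hk2 hH hle

end IsDualityPairing

end DualityPairing

section Main

variable {K : Type*} [Field K] {q t : Kˣ} {H : K[T;T⁻¹] →ₗ[K] K[T;T⁻¹]}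
  {B : K[T;T⁻¹] →ₗ[K] K[T;T⁻¹] →ₗ[K] K}

theorem isDualityPairing_of_zpow {ev : K[T;T⁻¹] →ₗ[K] K}
    (hev : ∀ m : ℤ, ev (T m) = (t : K) ^ (-m)) {Yz : ℤ → K[T;T⁻¹] →ₗ[K] K[T;T⁻¹]}
    (hYz0 : Yz 0 = LinearMap.id) (hYz1 : Yz 1 = (affineReflection q).toLinearMap ∘ₗ H)
    (hYzadd : ∀ a b : ℤ, Yz (a + b) = Yz a ∘ₗ Yz b)
    (hB : ∀ (m : ℤ) (g : K[T;T⁻¹]), B (T m) g = ev (Yz (-m) g)) :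
    IsDualityPairing q t H B where
  one_left g := by
    have hev' : ev = (laurentEval t⁻¹).toLinearMap := laurent_linearMap_ext fun m => by
      rw [hev, AlgHom.toLinearMap_apply, laurentEval_T, inv_zpow', Units.val_zpow_eq_zpow_val]
    rw [← T_zero, hB, neg_zero, hYz0, hev']
    rfl
  T_one_mul_left_apply f g := by
    have h : (B.flip (affineReflection q (H g))) ∘ₗ LinearMap.mulLeft K (T 1) = B.flip g :=
      laurent_linearMap_ext fun m => by
        change B (T 1 * T m) ((affineReflection q).toLinearMap (H g)) = B (T m) g
        rw [← T_add, hB, hB, ← LinearMap.comp_apply (affineReflection q).toLinearMap, ← hYz1,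
          ← LinearMap.comp_apply (Yz _), ← hYzadd, neg_add_rev, neg_add_cancel_right]
    exact LinearMap.congr_fun h f

theorem stmt2_general {K : Type*} [Field K] (q t : K)
    (S Top Pi Y : K[T;T⁻¹] →ₗ[K] K[T;T⁻¹])
    (hS : ∀ m : ℤ, S (T m) = T (-m))
    (hPi : ∀ m : ℤ, Pi (T m) = q ^ m • T (-m))
    (hT : ∀ f : K[T;T⁻¹], (T 2 - 1) * Top f
        = t • ((T 2 - 1) * S f) + (t - t⁻¹) • (S f - f))
    (hY : Y = Pi ∘ₗ Top)
    (ev : K[T;T⁻¹] →ₗ[K] K) (hev : ∀ m : ℤ, ev (T m) = t ^ (-m))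
    (Yz : ℤ → K[T;T⁻¹] →ₗ[K] K[T;T⁻¹])
    (hYz0 : Yz 0 = LinearMap.id) (hYz1 : Yz 1 = Y)
    (hYzadd : ∀ a b : ℤ, Yz (a + b) = Yz a ∘ₗ Yz b)
    (pair : K[T;T⁻¹] →ₗ[K] K[T;T⁻¹] →ₗ[K] K)
    (hpair : ∀ (m : ℤ) (g : K[T;T⁻¹]), pair (T m) g = ev (Yz (-m) g))
    (N : ℕ) (hq : IsPrimitiveRoot q (2 * N))
    (k : ℤ) (hk1 : -(N : ℤ) ≤ 2 * k) (hk2 : k < 0) (ht : t = q ^ k) :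
    (∀ f ∈ pair.ker, Top f ∈ pair.ker ∧ Pi f ∈ pair.ker ∧ T 1 * f ∈ pair.ker) ∧
    Module.finrank K (K[T;T⁻¹] ⧸ pair.ker) = 2 * N + 4 * k.natAbs ∧
    ∃ (hT' : pair.ker ≤ pair.ker.comap Top)
      (hP' : pair.ker ≤ pair.ker.comap Pi)
      (hX' : pair.ker ≤ pair.ker.comap (LinearMap.mulLeft K (T 1))),
      ∀ W : Submodule K (K[T;T⁻¹] ⧸ pair.ker),
        (∀ v ∈ W, pair.ker.mapQ pair.ker Top hT' v ∈ W ∧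
            pair.ker.mapQ pair.ker Pi hP' v ∈ W ∧
            pair.ker.mapQ pair.ker (LinearMap.mulLeft K (T 1)) hX' v ∈ W) →
        W = ⊥ ∨ W = ⊤ := by
  lift q to Kˣ using hq.isUnit (by omega)
  rw [IsPrimitiveRoot.coe_units_iff] at hq
  obtain rfl : t = ((q ^ k : Kˣ) : K) := by rw [ht, Units.val_zpow_eq_zpow_val]
  obtain rfl : S = invert.toLinearMap := laurent_linearMap_ext fun m => by
    rw [hS]; exact (invert_T m).symm
  obtain rfl : Pi = (affineReflection q).toLinearMap := laurent_linearMap_ext fun m => by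
    rw [hPi, AlgHom.toLinearMap_apply, affineReflection_T, Units.val_zpow_eq_zpow_val]
  have hH : IsDemazureLusztig (q ^ k) Top := hT
  have hB : IsDualityPairing q (q ^ k) Top pair :=
    isDualityPairing_of_zpow hev hYz0 (hYz1.trans hY) hYzadd hpair
  have hker := hB.isDAHASubmodule_ker hH
  refine ⟨fun f hf => ⟨hker.apply_mem f hf, hker.affineReflection_mem f hf,
    hker.T_one_mul_mem f hf⟩, ?_, hker.apply_mem, hker.affineReflection_mem, hker.T_one_mul_mem,
    fun W hW => ?_⟩
  · rw [hB.ker_eq_doubleZeroSubmodule hH hq hk1 hk2,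
      finrank_quotient_doubleZeroSubmodule hq hk1 hk2]
  · have hcomap : IsDAHASubmodule q Top (W.comap pair.ker.mkQ) :=
      ⟨fun f hf => (hW _ hf).1, fun f hf => (hW _ hf).2.1, fun f hf => (hW _ hf).2.2⟩
    exact eq_bot_or_eq_top_of_comap_mkQ
      (hB.eq_ker_or_eq_top hH hq hk1 hk2 hcomap (Submodule.le_comap_mkQ _ W))

end Main

end

/-- at a primitive `2N`-th root of unity `q½` with `t = q^k`,
`−N/2 ≤ k < 0`: `Rad` is an `A`-invariant subspace of `V`, the quotient
`V' = V/Rad` has dimension `2N + 4|k|`, and `V'` is a simple `A`-module: the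
only subspaces of `V'` invariant under the operators induced by `T`, `π` and
multiplication by `X` are `{0}` and `V'`. -/
theorem stmt2
    (q2 t2 : ℂ) (hq2 : q2 ≠ 0) (ht2 : t2 ≠ 0)
    (S Top Pi Y : V →ₗ[ℂ] V)
    (hS : ∀ m : ℤ, S (Xm m) = Xm (-m))
    (hPi : ∀ m : ℤ, Pi (Xm m) = q2 ^ m • Xm (-m))
    (hT : ∀ f : V, (Xm 2 - 1) * Top f
        = t2 • ((Xm 2 - 1) * S f) + (t2 - t2⁻¹) • (S f - f))
    (hY : Y = Pi ∘ₗ Top)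
    (ev : V →ₗ[ℂ] ℂ) (hev : ∀ m : ℤ, ev (Xm m) = t2 ^ (-m))
    (Yz : ℤ → V →ₗ[ℂ] V)
    (hYz0 : Yz 0 = LinearMap.id) (hYz1 : Yz 1 = Y)
    (hYzadd : ∀ a b : ℤ, Yz (a + b) = Yz a ∘ₗ Yz b)
    (pair : V →ₗ[ℂ] V →ₗ[ℂ] ℂ)
    (hpair : ∀ (m : ℤ) (g : V), pair (Xm m) g = ev (Yz (-m) g))
    (N : ℕ) (hN : 0 < N) (hq2prim : IsPrimitiveRoot q2 (2 * N))
    (k : ℤ) (hk1 : -(N : ℤ) ≤ 2 * k) (hk2 : k < 0) (ht2k : t2 = q2 ^ k)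
    :
    (∀ f ∈ Rad pair, Top f ∈ Rad pair ∧ Pi f ∈ Rad pair ∧ Xm 1 * f ∈ Rad pair) ∧
    Module.finrank ℂ (V ⧸ Rad pair) = 2 * N + 4 * k.natAbs ∧
    ∃ (hT' : Rad pair ≤ (Rad pair).comap Top)
      (hP' : Rad pair ≤ (Rad pair).comap Pi)
      (hX' : Rad pair ≤ (Rad pair).comap (LinearMap.mulLeft ℂ (Xm 1))),
      ∀ W : Submodule ℂ (V ⧸ Rad pair),
        (∀ v ∈ W, (Rad pair).mapQ (Rad pair) Top hT' v ∈ W ∧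
            (Rad pair).mapQ (Rad pair) Pi hP' v ∈ W ∧
            (Rad pair).mapQ (Rad pair) (LinearMap.mulLeft ℂ (Xm 1)) hX' v ∈ W) →
        W = ⊥ ∨ W = ⊤ := by
  exact stmt2_general q2 t2 S Top Pi Y hS hPi hT hY ev hev Yz hYz0 hYz1 hYzadd pair hpair N hq2prim
    k hk1 hk2 ht2k
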